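/- Let N ≥ 2, let R be an N×N real symmetric positive-definite matrix with difference covariance matrix D, let 1_N ∈ ℝ^N be the all-ones vector, and let g ∈ ℝ^N with difference vector Δg ∈ ℝ^{N−1}. Then gᵀ R⁻¹ g ≥ (Δg)ᵀ D⁻¹ (Δg), and the inequality is strict if and only if 1_Nᵀ R⁻¹ g ≠ 0. -/

import Mathlib

open Matrix

/-- The difference covariance matrix: for an `N×N` matrix `R` with `N = n+2`, the
`(N−1)×(N−1)` matrix with entries `D_{mk} = R_{NN} + R_{mk} − R_{mN} − R_{kN}`. -/
def diffMatrix {n : ℕ} (R : Matrix (Fin (n + 2)) (Fin (n + 2)) ℝ) :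
    Matrix (Fin (n + 1)) (Fin (n + 1)) ℝ :=
  fun m k =>
    R (Fin.last (n + 1)) (Fin.last (n + 1)) + R m.castSucc k.castSucc
      - R m.castSucc (Fin.last (n + 1)) - R k.castSucc (Fin.last (n + 1))

/-- The difference vector `Δg ∈ ℝ^{N−1}`, `(Δg)_m = g_m − g_N`. -/
def diffVec {n : ℕ} (g : Fin (n + 2) → ℝ) : Fin (n + 1) → ℝ :=
  fun m => g m.castSucc - g (Fin.last (n + 1))

/-- The difference operator as a matrix. -/
def diffOp (n : ℕ) : Matrix (Fin (n + 1)) (Fin (n + 2)) ℝ :=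
  fun m j => (if j = m.castSucc then 1 else 0) - (if j = Fin.last (n + 1) then 1 else 0)

lemma diffOp_mulVec {n : ℕ} (g : Fin (n + 2) → ℝ) : diffOp n *ᵥ g = diffVec g := by
  ext m
  simp [Matrix.mulVec, dotProduct, diffOp, diffVec, sub_mul, Finset.sum_sub_distrib]

lemma vecMul_diffOp_castSucc {n : ℕ} (z : Fin (n + 1) → ℝ) (m : Fin (n + 1)) :
    (z ᵥ* diffOp n) m.castSucc = z m := by
  simp [Matrix.vecMul, dotProduct, diffOp, Fin.castSucc_ne_last]

lemma vecMul_diffOp_last {n : ℕ} (z : Fin (n + 1) → ℝ) :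
    (z ᵥ* diffOp n) (Fin.last (n + 1)) = - ∑ m, z m := by
  have h : ∀ m : Fin (n + 1), Fin.last (n + 1) ≠ m.castSucc :=
    fun m => (Fin.castSucc_ne_last m).symm
  simp [Matrix.vecMul, dotProduct, diffOp, h]

lemma diffMatrix_eq {n : ℕ} (R : Matrix (Fin (n + 2)) (Fin (n + 2)) ℝ) (hR : R.IsSymm) :
    diffMatrix R = diffOp n * R * (diffOp n)ᵀ := by
  ext m k
  have h := hR.apply (Fin.last (n + 1)) k.castSucc
  simp only [Matrix.mul_apply, diffOp, diffMatrix, Matrix.transpose_apply, sub_mul, mul_sub,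
    Finset.sum_sub_distrib, ite_mul, mul_ite, one_mul, mul_one, zero_mul, mul_zero,
    Finset.sum_ite_eq', Finset.mem_univ, if_true]
  linarith

lemma diffMatrix_posDef {n : ℕ} (R : Matrix (Fin (n + 2)) (Fin (n + 2)) ℝ) (hR : R.IsSymm)
    (hp : R.PosDef) : (diffMatrix R).PosDef := by
  rw [diffMatrix_eq R hR]
  have := hp.mul_mul_conjTranspose_same (B := diffOp n) (by
    intro a b hab
    ext m
    have := congrFun hab m.castSucc
    simpa only [vecMul_diffOp_castSucc] using this)
  simpa [Matrix.conjTranspose_eq_transpose_of_trivial] using this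

/-- `gᵀ R⁻¹ g ≥ (Δg)ᵀ D⁻¹ (Δg)`, with strict inequality iff
`1ᵀ R⁻¹ g ≠ 0`. -/
theorem rss_quadratic_form_ge_drss
    (n : ℕ) (R : Matrix (Fin (n + 2)) (Fin (n + 2)) ℝ)
    (hRsymm : R.IsSymm) (hRpd : R.PosDef) (g : Fin (n + 2) → ℝ) :
    let D := diffMatrix R
    let ones : Fin (n + 2) → ℝ := fun _ => (1 : ℝ)
    diffVec g ⬝ᵥ (D⁻¹).mulVec (diffVec g) ≤ g ⬝ᵥ (R⁻¹).mulVec g ∧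
      (diffVec g ⬝ᵥ (D⁻¹).mulVec (diffVec g) < g ⬝ᵥ (R⁻¹).mulVec g
        ↔ ones ⬝ᵥ (R⁻¹).mulVec g ≠ 0) := by
  intro D ones
  have hu : IsUnit R.det := (Matrix.isUnit_iff_isUnit_det R).1 hRpd.isUnit
  have hDpd : D.PosDef := diffMatrix_posDef R hRsymm hRpd
  have hDu : IsUnit D.det := (Matrix.isUnit_iff_isUnit_det D).1 hDpd.isUnit
  set x := R⁻¹ *ᵥ g with hx
  set u := R⁻¹ *ᵥ ones with hud
  have hRx : R *ᵥ x = g := by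
    rw [hx, Matrix.mulVec_mulVec, Matrix.mul_nonsing_inv _ hu, Matrix.one_mulVec]
  have hRu : R *ᵥ u = ones := by
    rw [hud, Matrix.mulVec_mulVec, Matrix.mul_nonsing_inv _ hu, Matrix.one_mulVec]
  have hones : ones ≠ 0 := fun h => one_ne_zero (congrFun h 0)
  have hs : 0 < ones ⬝ᵥ u := by
    have := hRpd.inv.dotProduct_mulVec_pos hones
    simpa using this
  have hgu : g ⬝ᵥ u = ones ⬝ᵥ x := by
    rw [← hRx, ← hRu, dotProduct_comm (R *ᵥ x), Matrix.dotProduct_mulVec,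
      ← Matrix.mulVec_transpose, hRsymm.eq]
  set s := ones ⬝ᵥ u with hsd
  set t := ones ⬝ᵥ x with htd
  set y := x - (t / s) • u with hy
  have hy1 : ones ⬝ᵥ y = 0 := by
    rw [hy, dotProduct_sub, dotProduct_smul, ← hsd, ← htd, smul_eq_mul]
    field_simp
    ring
  set z : Fin (n + 1) → ℝ := fun m => y m.castSucc with hz
  have hPz : (diffOp n)ᵀ *ᵥ z = y := by
    rw [Matrix.mulVec_transpose]
    ext j
    refine Fin.lastCases ?_ (fun m => ?_) j
    · rw [vecMul_diffOp_last]
      simp only [dotProduct, ones, one_mul] at hy1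
      rw [Fin.sum_univ_castSucc] at hy1
      linarith
    · rw [vecMul_diffOp_castSucc]
  have hDz : D *ᵥ z = diffVec g := by
    have hRy : R *ᵥ y = g - (t / s) • ones := by
      rw [hy, Matrix.mulVec_sub, Matrix.mulVec_smul, hRx, hRu]
    show diffMatrix R *ᵥ z = _
    rw [diffMatrix_eq R hRsymm, ← Matrix.mulVec_mulVec, hPz, ← Matrix.mulVec_mulVec, hRy,
      diffOp_mulVec]
    ext m
    simp [diffVec, ones]
  have hDi : D⁻¹ *ᵥ diffVec g = z := by
    rw [← hDz, Matrix.mulVec_mulVec, Matrix.nonsing_inv_mul _ hDu, Matrix.one_mulVec]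
  have key : diffVec g ⬝ᵥ D⁻¹ *ᵥ diffVec g = g ⬝ᵥ x - t ^ 2 / s := by
    rw [hDi, ← diffOp_mulVec, dotProduct_comm, Matrix.dotProduct_mulVec,
      ← Matrix.mulVec_transpose, hPz, dotProduct_comm, hy, dotProduct_sub, dotProduct_smul, hgu,
      smul_eq_mul]
    ring
  rw [key]
  refine ⟨by have : 0 ≤ t ^ 2 / s := by positivity
             linarith, ?_⟩
  constructor
  · intro h h0
    rw [h0] at h
    simp at h
  · intro h
    have : 0 < t ^ 2 / s := by positivity
    linarith
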